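/- Let β > 1 with β ∉ ℕ, let A = {0,1,…,⌊β⌋}, r = ⌊β⌋/(β²−1), and {β} = β − ⌊β⌋. Assume r ≤ {β}/2. Then no x in the open interval I = (−r/β, r/β² − {β}/β²) has an optimal (−β,A)-representation. -/

import Mathlib

/-- A `(γ, B)`-representation of `x`: a sequence of digits `b i ∈ B` (here `b i` is the
digit `b_{i+1}` of the paper, i.e. sequences are 0-indexed) with `x = ∑_{i ≥ 1} b_i / γ^i`. -/
def IsRep (γ : ℝ) (B : Set ℝ) (b : ℕ → ℝ) (x : ℝ) : Prop :=
  (∀ i, b i ∈ B) ∧ HasSum (fun i : ℕ => b i / γ ^ (i + 1)) x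

/-- `J_{γ,B}`: the set of real numbers admitting a `(γ,B)`-representation. -/
def RepSet (γ : ℝ) (B : Set ℝ) : Set ℝ := {x | ∃ b, IsRep γ B b x}

/-- A `(γ,B)`-representation `c` of `x` is optimal if its partial sums approximate `x`
at least as well as those of any other `(γ,B)`-representation of `x`. -/
def IsOptimalRep (γ : ℝ) (B : Set ℝ) (c : ℕ → ℝ) (x : ℝ) : Prop :=
  IsRep γ B c x ∧ ∀ b : ℕ → ℝ, IsRep γ B b x → ∀ n : ℕ, 1 ≤ n →
    |x - ∑ i ∈ Finset.range n, c i / γ ^ (i + 1)| ≤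
      |x - ∑ i ∈ Finset.range n, b i / γ ^ (i + 1)|

/-- The digit alphabet `{0, 1, …, M}` as a set of reals. -/
def digitSet (M : ℤ) : Set ℝ := (fun k : ℤ => (k : ℝ)) '' Set.Icc 0 M

/-!
After `n` digits a representation of `x` in base `γ` leaves the rescaled error
`γ ^ n * (x - ∑ i < n, b i / γ ^ (i + 1))`, and an optimal representation must minimise its absolute
value at every `n`, among all prefixes whose rescaled error is itself representable. For `γ = -β`
and digits `0, …, ⌊β⌋` every point of `[-rβ, r]` is representable: this interval has length
`r(β + 1) ≥ 1`, so each of its points `w` has a digit `d` for which `-βw - d` lies in it again.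

If `x` lies in `I`, then `|βx| < 1/2`, so the best first digit is `0`, and the error after two
digits is then at least `-β²x` in absolute value. The prefix `1, ⌊β⌋` has the error `β²x + {β}`,
which is strictly smaller in absolute value because `β²x < r - {β} ≤ -{β}/2`. Hence no
representation is best both at `n = 1` and at `n = 2`.
-/

open Set Function

section Remainder

variable {γ x : ℝ} {B : Set ℝ} {b c : ℕ → ℝ}

/-- The rescaled error `γ ^ n * (x - ∑ i < n, b i / γ ^ (i + 1))` left after the first `n` digits of
an expansion `b` of `x`. It is encoded by its recursion, so that it is the orbit of `x` under the
digit maps `y ↦ γ * y - b n`; nothing is assumed about `b` representing `x`. -/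
def expansionRemainder (γ : ℝ) (b : ℕ → ℝ) (x : ℝ) : ℕ → ℝ
  | 0 => x
  | n + 1 => γ * expansionRemainder γ b x n - b n

theorem sub_sum_eq_expansionRemainder_div (hγ : γ ≠ 0) (b : ℕ → ℝ) (x : ℝ) (n : ℕ) :
    x - ∑ i ∈ Finset.range n, b i / γ ^ (i + 1) = expansionRemainder γ b x n / γ ^ n := by
  induction n with
  | zero => simp [expansionRemainder]
  | succ n ih =>
    rw [Finset.sum_range_succ, ← sub_sub, ih, expansionRemainder]
    field_simp
    ring

theorem expansionRemainder_congr {n : ℕ} (h : ∀ i < n, b i = c i) :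
    expansionRemainder γ b x n = expansionRemainder γ c x n := by
  induction n with
  | zero => rfl
  | succ n ih =>
    rw [expansionRemainder, expansionRemainder, ih fun i hi => h i (hi.trans n.lt_succ_self),
      h n n.lt_succ_self]

theorem isRep_of_isBounded_range_expansionRemainder (hγ : 1 < |γ|) (hb : ∀ i, b i ∈ B)
    (hR : Bornology.IsBounded (range (expansionRemainder γ b x))) : IsRep γ B b x := by
  have hγ0 : γ ≠ 0 := abs_pos.1 (one_pos.trans hγ)
  obtain ⟨C, hC⟩ := hR.exists_norm_le
  have summable_error : Summable fun n => expansionRemainder γ b x n / γ ^ n := by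
    refine Summable.of_norm_bounded (g := fun n => C * |γ|⁻¹ ^ n)
      ((summable_geometric_of_lt_one (by positivity) (inv_lt_one_of_one_lt₀ hγ)).mul_left C)
      fun n => ?_
    rw [norm_div, norm_pow, Real.norm_eq_abs γ, div_eq_mul_inv, inv_pow]
    gcongr
    exact hC _ (mem_range_self n)
  have telescope (i : ℕ) : b i / γ ^ (i + 1) = expansionRemainder γ b x i / γ ^ i -
      expansionRemainder γ b x (i + 1) / γ ^ (i + 1) := by
    rw [expansionRemainder]
    field_simp
    ring
  refine ⟨hb, ?_⟩
  simpa [telescope, expansionRemainder] using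
    summable_error.hasSum.sub ((hasSum_nat_add_iff' 1).2 summable_error.hasSum)

theorem subset_repSet_of_forall_exists_mul_sub_mem {S : Set ℝ} (hγ : 1 < |γ|)
    (hS : Bornology.IsBounded S) (h : ∀ w ∈ S, ∃ d ∈ B, γ * w - d ∈ S) : S ⊆ RepSet γ B := by
  intro x hx
  choose! d hdB hdS using h
  let digitMap : ℝ → ℝ := fun w => γ * w - d w
  let orbit : ℕ → ℝ := fun n => digitMap^[n] x
  have orbit_mem (n : ℕ) : orbit n ∈ S := MapsTo.iterate hdS n hx
  have remainder_eq_orbit (n : ℕ) : expansionRemainder γ (fun i => d (orbit i)) x n = orbit n := by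
    induction n with
    | zero => rfl
    | succ n ih =>
      rw [expansionRemainder, ih]
      exact (iterate_succ_apply' digitMap n x).symm
  refine ⟨fun i => d (orbit i), isRep_of_isBounded_range_expansionRemainder hγ
    (fun i => hdB _ (orbit_mem i)) (hS.subset (range_subset_iff.2 fun n => ?_))⟩
  rw [remainder_eq_orbit]
  exact orbit_mem n

theorem exists_isRep_of_expansionRemainder_mem_repSet {n : ℕ} (hγ : γ ≠ 0)
    (hb : ∀ i < n, b i ∈ B) (hR : expansionRemainder γ b x n ∈ RepSet γ B) :
    ∃ b', IsRep γ B b' x ∧ ∀ i < n, b' i = b i := by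
  obtain ⟨t, ht, hsum⟩ := hR
  set b' : ℕ → ℝ := fun i => if i < n then b i else t (i - n) with hb'
  have head_eq (i : ℕ) (hi : i < n) : b' i = b i := if_pos hi
  have tail_eq (i : ℕ) : b' (i + n) / γ ^ (i + n + 1) = t i / γ ^ (i + 1) / γ ^ n := by
    rw [hb', div_div, ← pow_add, add_right_comm]
    simp
  refine ⟨b', ⟨fun i => ?_, ?_⟩, head_eq⟩
  · by_cases hi : i < n
    · exact head_eq i hi ▸ hb i hi
    · simpa only [hb', if_neg hi] using ht (i - n)
  · rw [← hasSum_nat_add_iff' n, Finset.sum_congr rfl fun i hi => by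
      rw [head_eq i (Finset.mem_range.1 hi)], sub_sum_eq_expansionRemainder_div hγ]
    simpa only [tail_eq] using hsum.div_const (γ ^ n)

theorem IsOptimalRep.abs_expansionRemainder_le {n : ℕ} (hc : IsOptimalRep γ B c x) (hγ : γ ≠ 0)
    (hb : ∀ i < n, b i ∈ B) (hR : expansionRemainder γ b x n ∈ RepSet γ B) :
    |expansionRemainder γ c x n| ≤ |expansionRemainder γ b x n| := by
  rcases n.eq_zero_or_pos with rfl | hn
  · rfl
  obtain ⟨b', hb', head_eq⟩ := exists_isRep_of_expansionRemainder_mem_repSet hγ hb hR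
  have hle := hc.2 b' hb' n hn
  rw [sub_sum_eq_expansionRemainder_div hγ, sub_sum_eq_expansionRemainder_div hγ,
    expansionRemainder_congr head_eq, abs_div, abs_div] at hle
  exact (div_le_div_iff_of_pos_right (abs_pos.2 (pow_ne_zero n hγ))).1 hle

theorem IsOptimalRep.abs_mul_sub_le {d : ℝ} (hc : IsOptimalRep γ B c x) (hγ : γ ≠ 0) (hd : d ∈ B)
    (hR : γ * x - d ∈ RepSet γ B) : |γ * x - c 0| ≤ |γ * x - d| :=
  hc.abs_expansionRemainder_le (n := 1) (b := fun _ => d) hγ (fun _ _ => hd) hR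

theorem IsOptimalRep.abs_mul_mul_sub_sub_le {d e : ℝ} (hc : IsOptimalRep γ B c x) (hγ : γ ≠ 0)
    (hd : d ∈ B) (he : e ∈ B) (hR : γ * (γ * x - d) - e ∈ RepSet γ B) :
    |γ * (γ * x - c 0) - c 1| ≤ |γ * (γ * x - d) - e| := by
  have digits_mem (i : ℕ) : update (fun _ => e) 0 d i ∈ B := by
    cases i <;> simpa
  simpa [expansionRemainder] using
    hc.abs_expansionRemainder_le (n := 2) hγ (fun i _ => digits_mem i)
      (by simpa [expansionRemainder] using hR)

end Remainder

section DigitSet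

variable {M : ℤ}

theorem intCast_mem_digitSet {k : ℤ} (h0 : 0 ≤ k) (hM : k ≤ M) : (k : ℝ) ∈ digitSet M :=
  mem_image_of_mem _ ⟨h0, hM⟩

theorem nonneg_of_mem_digitSet {d : ℝ} (hd : d ∈ digitSet M) : 0 ≤ d := by
  obtain ⟨k, ⟨hk, -⟩, rfl⟩ := hd
  exact Int.cast_nonneg hk

theorem exists_mem_digitSet_sub_mem_Icc {l u v : ℝ} (hM : 0 ≤ M) (hlu : l + 1 ≤ u)
    (hv : v ∈ Icc l (u + M)) : ∃ d ∈ digitSet M, v - d ∈ Icc l u := by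
  obtain ⟨hlv, hvu⟩ := hv
  have hfloor := Int.floor_le (v - l)
  rcases le_total ⌊v - l⌋ M with h | h
  · have := Int.lt_floor_add_one (v - l)
    exact ⟨⌊v - l⌋, intCast_mem_digitSet (Int.floor_nonneg.2 (by linarith)) h,
      by linarith, by linarith⟩
  · have : (M : ℝ) ≤ ⌊v - l⌋ := Int.cast_le.2 h
    exact ⟨M, intCast_mem_digitSet hM le_rfl, by linarith, by linarith⟩

theorem Icc_subset_repSet_neg_digitSet {β r : ℝ} (hβ : 1 < β) (hM : β - 1 ≤ M)
    (hr : r = M / (β ^ 2 - 1)) : Icc (-(r * β)) r ⊆ RepSet (-β) (digitSet M) := by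
  have hβ2 : 0 < β ^ 2 - 1 := by nlinarith
  have hrM : r * (β ^ 2 - 1) = M := by rw [hr, div_mul_cancel₀ _ hβ2.ne']
  have hM0 : 0 ≤ M := by exact_mod_cast (by linarith : (0 : ℝ) ≤ M)
  have length_ge_one : 1 ≤ r * (β + 1) := by
    refine le_of_mul_le_mul_right ?_ (sub_pos.2 hβ)
    linarith
  refine subset_repSet_of_forall_exists_mul_sub_mem
    (by rwa [abs_neg, abs_of_pos (by linarith)]) (Metric.isBounded_Icc _ _) fun w hw => ?_
  refine exists_mem_digitSet_sub_mem_Icc hM0 (by linarith) ⟨?_, ?_⟩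
  · nlinarith [hw.2]
  · nlinarith [hw.1]

theorem IsOptimalRep.apply_zero_eq_zero {γ x : ℝ} {c : ℕ → ℝ}
    (hc : IsOptimalRep γ (digitSet M) c x) (hγ : γ ≠ 0) (hx : |γ * x| < 1 / 2)
    (hR : γ * x ∈ RepSet γ (digitSet M)) : c 0 = 0 := by
  obtain ⟨k, ⟨hk0, hkM⟩, hk⟩ := hc.1.1 0
  have zero_mem : (0 : ℝ) ∈ digitSet M := mod_cast intCast_mem_digitSet le_rfl (hk0.trans hkM)
  have hle : |γ * x - k| ≤ |γ * x| := by
    simpa [← hk] using hc.abs_mul_sub_le hγ zero_mem (by rwa [sub_zero])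
  have abs_lt_one : |(k : ℝ)| < 1 := by
    have := abs_sub_abs_le_abs_sub (k : ℝ) (γ * x)
    rw [abs_sub_comm] at this
    linarith
  have : k = 0 := Int.abs_lt_one_iff.1 (mod_cast abs_lt_one)
  simp [← hk, this]

theorem not_isOptimalRep_of_abs_mul_mul_sub_sub_lt {γ x d e : ℝ} {c : ℕ → ℝ} (hγ : γ ≠ 0)
    (hx : |γ * x| < 1 / 2) (hx_mem : γ * x ∈ RepSet γ (digitSet M))
    (hd : d ∈ digitSet M) (he : e ∈ digitSet M)
    (hde_mem : γ * (γ * x - d) - e ∈ RepSet γ (digitSet M))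
    (hde : |γ * (γ * x - d) - e| < -(γ * (γ * x))) : ¬ IsOptimalRep γ (digitSet M) c x := by
  intro hc
  have second_error := hc.abs_mul_mul_sub_sub_le hγ hd he hde_mem
  rw [hc.apply_zero_eq_zero hγ hx hx_mem, sub_zero] at second_error
  have := neg_le_abs (γ * (γ * x) - c 1)
  linarith [nonneg_of_mem_digitSet (hc.1.1 1)]

end DigitSet

/-- Case 3 of the proof of the main theorem: for `β > 1`, `β ∉ ℕ`,
`A = {0,…,⌊β⌋}`, `r = ⌊β⌋/(β²−1)`, `{β} = β − ⌊β⌋`, if `r ≤ {β}/2`, then no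
`x ∈ (−r/β, r/β² − {β}/β²)` has an optimal `(−β,A)`-representation. -/
theorem no_optimal_rep_on_interval_case3
    (β : ℝ) (hβ : 1 < β) (hβN : ∀ n : ℕ, β ≠ n)
    (r : ℝ) (hr : r = (⌊β⌋ : ℝ) / (β ^ 2 - 1))
    (hr1 : r ≤ (β - ⌊β⌋) / 2) :
    ∀ x ∈ Set.Ioo (-r / β) (r / β ^ 2 - (β - ⌊β⌋) / β ^ 2),
      ¬ ∃ c : ℕ → ℝ, IsOptimalRep (-β) (digitSet ⌊β⌋) c x := by
  rintro x ⟨hx_lower, hx_upper⟩ ⟨c, hc⟩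
  have hβ0 : 0 < β := one_pos.trans hβ
  have hfloor := Int.lt_floor_add_one β
  have hM : 1 ≤ ⌊β⌋ := Int.le_floor.2 (mod_cast hβ.le)
  have one_mem : (1 : ℝ) ∈ digitSet ⌊β⌋ := mod_cast intCast_mem_digitSet zero_le_one hM
  have floor_mem : (⌊β⌋ : ℝ) ∈ digitSet ⌊β⌋ :=
    intCast_mem_digitSet (zero_le_one.trans hM) le_rfl
  have hr0 : 0 < r := hr ▸ div_pos (mod_cast hM) (by nlinarith)
  have hrep := Icc_subset_repSet_neg_digitSet hβ (by linarith) hr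
  have hβx : -r < β * x := by rwa [div_lt_iff₀' hβ0] at hx_lower
  have hββx : β * (β * x) < r - (β - ⌊β⌋) := by
    rw [← sub_div, lt_div_iff₀' (by positivity)] at hx_upper
    linarith
  have hββx_lower : -(r * β) < β * (β * x) := by nlinarith
  have hβx_neg : β * x < 0 := by nlinarith
  have error_eq : -β * (-β * x - 1) - ⌊β⌋ = β * (β * x) + (β - ⌊β⌋) := by ring
  refine not_isOptimalRep_of_abs_mul_mul_sub_sub_lt (d := 1) (e := ⌊β⌋) (neg_ne_zero.2 hβ0.ne') ?_
    (hrep ⟨by nlinarith, by linarith⟩) one_mem floor_mem ?_ ?_ hc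
  · exact abs_lt.2 ⟨by linarith, by linarith⟩
  · rw [error_eq]
    exact hrep ⟨by linarith, by linarith⟩
  · rw [error_eq]
    exact abs_lt.2 ⟨by linarith, by linarith⟩
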